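/- Let f : ℤⁿ → ℝ ∪ {+∞} be a locally discrete midpoint convex function. Then discrete midpoint convexity f(x) + f(y) ≥ f(⌈(x+y)/2⌉) + f(⌊(x+y)/2⌋) holds for all x, y ∈ ℤⁿ with x ≤ y componentwise. -/

import Mathlib

/-- The ℓ∞-norm of an integer vector, as a natural number. -/
def linf {n : ℕ} (z : Fin n → ℤ) : ℕ :=
  Finset.univ.sup fun i => (z i).natAbs

/-- Componentwise round-up of (x+y)/2. -/
def avgUp {n : ℕ} (x y : Fin n → ℤ) : Fin n → ℤ :=
  fun i => ⌈((x i + y i : ℚ)) / 2⌉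

/-- Componentwise round-down of (x+y)/2. -/
def avgDown {n : ℕ} (x y : Fin n → ℤ) : Fin n → ℤ :=
  fun i => ⌊((x i + y i : ℚ)) / 2⌋

/-- A set `S ⊆ ℤⁿ` is discrete midpoint convex. -/
def DMCSet {n : ℕ} (S : Set (Fin n → ℤ)) : Prop :=
  ∀ ⦃x⦄, x ∈ S → ∀ ⦃y⦄, y ∈ S → 2 ≤ linf (x - y) →
    avgUp x y ∈ S ∧ avgDown x y ∈ S

/-- `f` satisfies discrete midpoint convexity for the pair `(x, y)`.
Values are in `ℝ ∪ {+∞}`, modeled as `WithTop ℝ`. -/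
def DMCPair {n : ℕ} (f : (Fin n → ℤ) → WithTop ℝ) (x y : Fin n → ℤ) : Prop :=
  f (avgUp x y) + f (avgDown x y) ≤ f x + f y

/-- `f` is globally discrete midpoint convex. -/
def GloballyDMC {n : ℕ} (f : (Fin n → ℤ) → WithTop ℝ) : Prop :=
  ∀ x y : Fin n → ℤ, 2 ≤ linf (x - y) → DMCPair f x y

/-- The effective domain of `f`. -/
def effDom {n : ℕ} (f : (Fin n → ℤ) → WithTop ℝ) : Set (Fin n → ℤ) :=
  {x | f x ≠ ⊤}

/-- `f` is locally discrete midpoint convex. -/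
def LocallyDMC {n : ℕ} (f : (Fin n → ℤ) → WithTop ℝ) : Prop :=
  DMCSet (effDom f) ∧ ∀ x y : Fin n → ℤ, linf (x - y) = 2 → DMCPair f x y

theorem avgDown_apply {n : ℕ} (x y : Fin n → ℤ) (i : Fin n) :
    avgDown x y i = (x i + y i) / 2 := by
  have h₁ : 2 * ((x i + y i) / 2) ≤ x i + y i := by omega
  have h₂ : x i + y i < 2 * ((x i + y i) / 2) + 2 := by omega
  have h₁' : (2 : ℚ) * (((x i + y i) / 2 : ℤ) : ℚ) ≤ x i + y i := by exact_mod_cast h₁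
  have h₂' : (x i + y i : ℚ) < 2 * (((x i + y i) / 2 : ℤ) : ℚ) + 2 := by exact_mod_cast h₂
  exact Int.floor_eq_iff.2 ⟨by linarith, by linarith⟩

theorem avgUp_apply {n : ℕ} (x y : Fin n → ℤ) (i : Fin n) :
    avgUp x y i = (x i + y i + 1) / 2 := by
  have h₁ : 2 * ((x i + y i + 1) / 2) < x i + y i + 2 := by omega
  have h₂ : x i + y i ≤ 2 * ((x i + y i + 1) / 2) := by omega
  have h₁' : (2 : ℚ) * (((x i + y i + 1) / 2 : ℤ) : ℚ) < x i + y i + 2 := by exact_mod_cast h₁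
  have h₂' : (x i + y i : ℚ) ≤ 2 * (((x i + y i + 1) / 2 : ℤ) : ℚ) := by exact_mod_cast h₂
  exact Int.ceil_eq_iff.2 ⟨by linarith, by linarith⟩

theorem linf_le_iff {n : ℕ} {z : Fin n → ℤ} {m : ℕ} :
    linf z ≤ m ↔ ∀ i, (z i).natAbs ≤ m := by
  simp [linf]

/-- A discrete midpoint convex set containing `x ≤ y` contains `x` shifted by the indicator
vector of any superlevel set of `y - x`. -/
theorem DMCSet.add_superlevel_mem {n : ℕ} {S : Set (Fin n → ℤ)} (hS : DMCSet S)
    {x : Fin n → ℤ} (hx : x ∈ S) (m : ℕ) :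
    ∀ y ∈ S, x ≤ y → linf (x - y) ≤ m → ∀ k : ℕ, 1 ≤ k →
      (fun i => x i + if (k : ℤ) ≤ y i - x i then 1 else 0) ∈ S := by
  induction m using Nat.strong_induction_on with
  | _ m ih =>
    intro y hy hxy hm k hk
    have hle : ∀ i, x i ≤ y i := hxy
    have hbd := linf_le_iff.1 hm
    simp only [Pi.sub_apply] at hbd
    by_cases h2 : 2 ≤ linf (x - y)
    · obtain ⟨hup, hdown⟩ := hS hx hy h2
      obtain ⟨j, hj | hj⟩ := Nat.even_or_odd' k
      · have := ih (m - 1) (by omega) _ hdown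
          (fun i => by
            have := hle i
            have := avgDown_apply x y i
            change x i ≤ avgDown x y i
            omega)
          (linf_le_iff.2 fun i => by
            simp only [Pi.sub_apply, avgDown_apply]
            have := hle i
            have := hbd i
            omega) j (by omega)
        convert this using 4 with i
        rw [avgDown_apply]
        omega
      · have := ih (m - 1) (by omega) _ hup
          (fun i => by
            have := hle i
            have := avgUp_apply x y i
            change x i ≤ avgUp x y i
            omega)
          (linf_le_iff.2 fun i => by
            simp only [Pi.sub_apply, avgUp_apply]
            have := hle i
            have := hbd i
            omega) (j + 1) (by omega)
        convert this using 4 with i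
        rw [avgUp_apply]
        omega
    · have hone : ∀ i, (x i - y i).natAbs ≤ 1 :=
        (linf_le_iff (z := x - y)).1 (by omega)
      obtain rfl | hk' := hk.eq_or_lt
      · convert hy using 2 with i
        have := hle i
        have := hone i
        split_ifs <;> omega
      · convert hx using 2 with i
        have := hle i
        have := hone i
        split_ifs <;> omega

section Chain

variable {n : ℕ} {A : ℕ → Fin n → Prop} [∀ k, DecidablePred (A k)]

/-- For a decreasing chain of sets, the members of a subfamily are the superlevel sets of the sum
of its indicator functions. -/
theorem mem_iff_card_le_sum_of_antitone
    (hA : ∀ k l, k ≤ l → ∀ i, A l i → A k i) {K : Finset ℕ} {k : ℕ} (hk : k ∈ K) (i : Fin n) :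
    A k i ↔ ((K.filter (· ≤ k)).card : ℤ) ≤ ∑ l ∈ K, if A l i then 1 else 0 := by
  rw [← Finset.sum_filter, Finset.sum_const, nsmul_eq_mul, mul_one, Nat.cast_le]
  constructor
  · intro h
    refine Finset.card_le_card fun l hl => ?_
    rw [Finset.mem_filter] at hl ⊢
    exact ⟨hl.1, hA _ _ hl.2 i h⟩
  · intro h
    by_contra hki
    refine absurd h (not_le.2 (Finset.card_lt_card (Finset.ssubset_iff_of_subset ?_ |>.2 ?_)))
    · intro l hl
      rw [Finset.mem_filter] at hl ⊢
      refine ⟨hl.1, le_of_not_ge fun hkl => hki (hA _ _ hkl i hl.2)⟩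
    · exact ⟨k, by simp [hk], by simp [hki]⟩

/-- If a discrete midpoint convex set contains `x` and `x` plus the sum of the indicator vectors
of a chain, then it contains `x` plus the sum over any subchain. -/
theorem DMCSet.add_subchain_mem {S : Set (Fin n → ℤ)} (hS : DMCSet S)
    (hA : ∀ k l, k ≤ l → ∀ i, A l i → A k i) (J : Finset ℕ) :
    ∀ (K : Finset ℕ) (x : Fin n → ℤ), J ⊆ K → x ∈ S →
      (fun i => x i + ∑ k ∈ K, if A k i then 1 else 0) ∈ S →
      (fun i => x i + ∑ k ∈ J, if A k i then 1 else 0) ∈ S := by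
  induction J using Finset.induction_on with
  | empty => intro K x _ hx _; simpa using hx
  | insert k J hkJ ih =>
    intro K x hJK hx hK
    have hkK : k ∈ K := hJK (Finset.mem_insert_self _ _)
    have hxk : (fun i => x i + if A k i then 1 else 0) ∈ S := by
      have hle : x ≤ fun i => x i + ∑ k ∈ K, if A k i then (1 : ℤ) else 0 := fun i =>
        le_add_of_nonneg_right (Finset.sum_nonneg fun l _ => by split_ifs <;> simp)
      have := hS.add_superlevel_mem hx _ _ hK hle le_rfl (K.filter (· ≤ k)).card
        (Finset.card_pos.2 ⟨k, by simp [hkK]⟩)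
      convert this using 4 with i
      rw [add_sub_cancel_left]
      exact mem_iff_card_le_sum_of_antitone hA hkK i
    have := ih (K.erase k) _
      (fun l hl => Finset.mem_erase.2
        ⟨fun h => hkJ (h ▸ hl), hJK (Finset.mem_insert_of_mem hl)⟩) hxk
      (by
        convert hK using 2 with i
        rw [add_assoc, Finset.add_sum_erase K (fun k => if A k i then (1 : ℤ) else 0) hkK])
    convert this using 2 with i
    rw [Finset.sum_insert hkJ, add_assoc]

end Chain

/-- Local discrete midpoint convexity gives submodularity along nested indicator vectors. -/
theorem LocallyDMC.add_nested_le {n : ℕ} {f : (Fin n → ℤ) → WithTop ℝ} (h : LocallyDMC f)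
    (z : Fin n → ℤ) (P Q : Fin n → Prop) [DecidablePred P] [DecidablePred Q]
    (hPQ : ∀ i, Q i → P i) :
    f (fun i => z i + if P i then 1 else 0) + f (fun i => z i + if Q i then 1 else 0) ≤
      f z + f (fun i => z i + (if P i then 1 else 0) + if Q i then 1 else 0) := by
  by_cases hQ : ∃ i, Q i
  · obtain ⟨j, hj⟩ := hQ
    have hdist : linf (z - fun i => z i + (if P i then 1 else 0) + if Q i then 1 else 0) = 2 := by
      refine le_antisymm (linf_le_iff.2 fun i => ?_) ?_
      · simp only [Pi.sub_apply]
        split_ifs <;> omega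
      · have := linf_le_iff.1 (le_refl
          (linf (z - fun i => z i + (if P i then 1 else 0) + if Q i then 1 else 0))) j
        simp only [Pi.sub_apply, hj, hPQ j hj, if_true] at this
        omega
    have := h.2 _ _ hdist
    unfold DMCPair at this
    convert this using 3
    · funext i
      rw [avgUp_apply]
      have := hPQ i
      split_ifs <;> first | omega | tauto
    · funext i
      rw [avgDown_apply]
      have := hPQ i
      split_ifs <;> first | omega | tauto
  · push Not at hQ
    simp [hQ, add_comm]

/-- A set function satisfying the local exchange inequality on subsets of `K` is submodular for
disjoint pairs of subsets of `K`. -/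
theorem add_le_add_union_of_local {α : Type*} [DecidableEq α] {K : Finset α} {g : Finset α → ℝ}
    (hg : ∀ B k l, k ≠ l → k ∉ B → l ∉ B → insert k (insert l B) ⊆ K →
      g (insert k B) + g (insert l B) ≤ g B + g (insert k (insert l B)))
    (J L : Finset α) (hdisj : Disjoint J L) (hK : J ∪ L ⊆ K) :
    g J + g L ≤ g ∅ + g (J ∪ L) := by
  have step : ∀ k B J, k ∉ B ∪ J → insert k (B ∪ J) ⊆ K →
      g (insert k B) + g (B ∪ J) ≤ g B + g (insert k (B ∪ J)) := by
    intro k B J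
    induction J using Finset.induction_on with
    | empty => intro _ _; simp [add_comm]
    | insert l J hl ih =>
      intro hk hsub
      rw [Finset.union_insert] at hk hsub ⊢
      by_cases hlB : l ∈ B ∪ J
      · rw [Finset.insert_eq_of_mem hlB] at hk hsub ⊢
        exact ih hk hsub
      · rw [Finset.mem_insert, not_or] at hk
        have h₁ := hg (B ∪ J) k l hk.1 hk.2 hlB hsub
        have h₂ := ih hk.2 ((Finset.insert_subset_insert _ (Finset.subset_insert _ _)).trans hsub)
        linarith
  induction L using Finset.induction_on with
  | empty => simp [add_comm]
  | insert l L hl ih =>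
    rw [Finset.disjoint_insert_right] at hdisj
    rw [Finset.union_insert] at hK ⊢
    have h₁ := ih hdisj.2 ((Finset.subset_insert _ _).trans hK)
    have h₂ := step l L J (by simp [hl, hdisj.1]) (by rwa [Finset.union_comm L J])
    rw [Finset.union_comm L J] at h₂
    linarith

theorem sum_range_even_ite_lt (t : ℤ) (ht : 0 ≤ t) (m : ℕ) :
    (∑ k ∈ (Finset.range m).filter (Even ·), if (k : ℤ) < t then (1 : ℤ) else 0) =
      (min t m + 1) / 2 := by
  induction m with
  | zero => simp [ht]
  | succ m ih =>
    rw [Finset.sum_filter] at ih ⊢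
    rw [Finset.sum_range_succ, ih]
    push_cast
    split_ifs with h₁ h₂ <;> simp only [Nat.even_iff] at h₁ <;> omega

theorem sum_range_odd_ite_lt (t : ℤ) (ht : 0 ≤ t) (m : ℕ) :
    (∑ k ∈ (Finset.range m).filter (¬ Even ·), if (k : ℤ) < t then (1 : ℤ) else 0) =
      min t m / 2 := by
  induction m with
  | zero => simp [ht]
  | succ m ih =>
    rw [Finset.sum_filter] at ih ⊢
    rw [Finset.sum_range_succ, ih]
    push_cast
    split_ifs with h₁ h₂ <;> simp only [Nat.even_iff] at h₁ <;> omega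

theorem sum_range_ite_lt (t : ℤ) (ht : 0 ≤ t) (m : ℕ) :
    (∑ k ∈ Finset.range m, if (k : ℤ) < t then (1 : ℤ) else 0) = min t m := by
  rw [← Finset.sum_filter_add_sum_filter_not _ (Even ·), sum_range_even_ite_lt t ht,
    sum_range_odd_ite_lt t ht]
  omega

/-- For a locally discrete midpoint convex function, discrete midpoint
convexity holds for all pairs `x ≤ y` (componentwise). -/
theorem locallyDMC_dmc_of_le {n : ℕ} (f : (Fin n → ℤ) → WithTop ℝ)
    (h : LocallyDMC f) (x y : Fin n → ℤ) (hxy : x ≤ y) :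
    DMCPair f x y := by
  by_cases hx : f x = ⊤
  · simp [DMCPair, hx]
  by_cases hy : f y = ⊤
  · simp [DMCPair, hy]
  have hle : ∀ i, 0 ≤ y i - x i := fun i => sub_nonneg.2 (hxy i)
  set m := linf (y - x) with hm
  have hbd : ∀ i, min (y i - x i) (m : ℤ) = y i - x i := fun i => by
    have h₁ := linf_le_iff.1 hm.ge i
    have h₂ := hle i
    rw [Pi.sub_apply] at h₁
    omega
  let p : Finset ℕ → Fin n → ℤ :=
    fun J i => x i + ∑ k ∈ J, if (k : ℤ) < y i - x i then 1 else 0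
  have hanti : ∀ k l : ℕ, k ≤ l → ∀ i, (l : ℤ) < y i - x i → (k : ℤ) < y i - x i :=
    fun k l hkl i hl => by omega
  have hp_range : p (Finset.range m) = y := by
    funext i
    simp only [p]
    rw [sum_range_ite_lt _ (hle i), hbd]
    ring
  have hp_even : p ((Finset.range m).filter (Even ·)) = avgUp x y := by
    funext i
    simp only [p]
    rw [sum_range_even_ite_lt _ (hle i), hbd, avgUp_apply]
    omega
  have hp_odd : p ((Finset.range m).filter (¬ Even ·)) = avgDown x y := by
    funext i
    simp only [p]
    rw [sum_range_odd_ite_lt _ (hle i), hbd, avgDown_apply]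
    omega
  have hp_empty : p ∅ = x := by simp [p]
  have hfin : ∀ J ⊆ Finset.range m, (((f (p J)).untopD 0 : ℝ) : WithTop ℝ) = f (p J) := by
    intro J hJ
    have hmem : p J ∈ effDom f :=
      h.1.add_subchain_mem hanti J (Finset.range m) x hJ hx (hp_range ▸ hy : p _ ∈ effDom f)
    obtain ⟨r, hr⟩ := WithTop.ne_top_iff_exists.1 hmem
    rw [← hr, WithTop.untopD_coe]
  have hlocal : ∀ B k l, l < k → k ∉ B → l ∉ B →
      f (p (insert l B)) + f (p (insert k B)) ≤ f (p B) + f (p (insert k (insert l B))) := by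
    intro B k l hlk hk hl
    have hins : ∀ k B, k ∉ B →
        p (insert k B) = fun i => p B i + if (k : ℤ) < y i - x i then 1 else 0 := by
      intro k B hk
      funext i
      simp only [p]
      rw [Finset.sum_insert hk]
      ring
    rw [hins k (insert l B) (by simp [hk, hlk.ne']), hins l B hl, hins k B hk]
    exact h.add_nested_le (p B) _ _ (hanti l k hlk.le)
  have hsub := add_le_add_union_of_local (K := Finset.range m)
    (g := fun J => (f (p J)).untopD 0) (by
      intro B k l hkl hk hl hK
      have hlB : insert l B ⊆ Finset.range m := (Finset.subset_insert _ _).trans hK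
      have hkB : insert k B ⊆ Finset.range m :=
        (Finset.insert_subset_insert _ (Finset.subset_insert _ _)).trans hK
      rw [← WithTop.coe_le_coe, WithTop.coe_add, WithTop.coe_add, hfin _ hlB, hfin _ hkB,
        hfin _ hK, hfin _ ((Finset.subset_insert _ _).trans hlB)]
      obtain hlt | hlt := hkl.lt_or_gt
      · rw [Finset.insert_comm]
        exact hlocal B l k hlt hl hk
      · rw [add_comm]
        exact hlocal B k l hlt hk hl)
    _ _ (Finset.disjoint_filter_filter_not (Finset.range m) (Finset.range m) (Even ·))
    (Finset.filter_union_filter_not_eq _ _).le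
  rw [Finset.filter_union_filter_not_eq, ← WithTop.coe_le_coe, WithTop.coe_add, WithTop.coe_add,
    hfin _ (Finset.filter_subset _ _), hfin _ (Finset.filter_subset _ _),
    hfin _ (Finset.empty_subset _), hfin _ subset_rfl, hp_even, hp_odd, hp_empty, hp_range] at hsub
  exact hsub
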